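/- Let U ⊆ ℝⁿ be open and u ∈ BV(U). Then the coarea formula holds: the total variation |Du|(U) equals ∫_ℝ Per({u > t}, U) dt, where Per(E, U) denotes the perimeter of E in U. -/

import Mathlib

open MeasureTheory
open scoped RealInnerProductSpace ENNReal

/-- The divergence of a vector field `φ : ℝⁿ → ℝⁿ`: `div φ = ∑ᵢ ∂ᵢφⁱ`. -/
noncomputable def divg {n : ℕ}
    (φ : EuclideanSpace ℝ (Fin n) → EuclideanSpace ℝ (Fin n))
    (x : EuclideanSpace ℝ (Fin n)) : ℝ :=
  ∑ i : Fin n, ⟪fderiv ℝ φ x (EuclideanSpace.single i 1), EuclideanSpace.single i 1⟫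

/-- The total variation `|Du|(U)` of `u` on an open set `U ⊆ ℝⁿ`:
`sup {∫_U u · div φ : φ ∈ C¹_c(U, ℝⁿ), |φ| ≤ 1}` (valued in `[0,∞]`). -/
noncomputable def variationOn {n : ℕ} (U : Set (EuclideanSpace ℝ (Fin n)))
    (u : EuclideanSpace ℝ (Fin n) → ℝ) : ℝ≥0∞ :=
  ⨆ (φ : EuclideanSpace ℝ (Fin n) → EuclideanSpace ℝ (Fin n)) (_ : ContDiff ℝ 1 φ)
    (_ : HasCompactSupport φ) (_ : tsupport φ ⊆ U) (_ : ∀ x, ‖φ x‖ ≤ 1),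
    ENNReal.ofReal (∫ x in U, u x * divg φ x)

/-- The perimeter of `E` in `U`: the total variation of `χ_E` in `U`. -/
noncomputable def perimeterIn {n : ℕ} (U : Set (EuclideanSpace ℝ (Fin n)))
    (E : Set (EuclideanSpace ℝ (Fin n))) : ℝ≥0∞ :=
  variationOn U (E.indicator fun _ => (1 : ℝ))

/-!
Write `S t = {x | t < u x}`.

`|Du|(U) ≤ ∫ Per(S t, U) dt`: since `∫ div φ = 0` for a test field `φ`, the layer cake formula
`a = ∫ (χ_{t < a} - χ_{t < 0}) dt` and Fubini's theorem give `∫ u div φ = ∫ (∫_{S t} div φ) dt`,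
and the inner integral is at most `Per(S t, U)`.

`∫ Per(S t, U) dt ≤ |Du|(U)`: let `vₖ` be mollifications of `u`, and compose them with smooth steps
`ηₖ(· - t)` increasing from `0` to `1` on `[0, 1/k]`. For almost every `t` the compositions
`ηₖ(vₖ - t)` converge to `χ_{S t}` almost everywhere, so lower semicontinuity of the variation gives
`Per(S t, V) ≤ liminf ∫_V ηₖ'(vₖ - t) |∇vₖ|` for `V` relatively compact in `U`. By Fatou's lemma,
Tonelli's theorem and `∫ ηₖ' = 1`, the integral over `t` is at most `liminf ∫_V |∇vₖ|`. Testing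
with cutoffs of `-∇vₖ / √(δ² + |∇vₖ|²)` shows `∫_V |∇vₖ| ≤ |Dvₖ|(V)`, and
`|Dvₖ|(V) ≤ |Du|(U)` for large `k` because mollification averages translates. Finally `V` exhausts
`U`.
-/

open Set Filter Topology Metric
open scoped Convolution

section Exhaustion

lemma exists_monotone_isCompact_exhaustion {X : Type*} [TopologicalSpace X]
    [LocallyCompactSpace X] [SecondCountableTopology X] {U : Set X} (hU : IsOpen U) :
    ∃ K : ℕ → Set X, Monotone K ∧ (∀ k, IsCompact (K k)) ∧ (∀ k, K k ⊆ U) ∧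
      ∀ T, IsCompact T → T ⊆ U → ∀ᶠ k in atTop, T ⊆ interior (K k) := by
  have : LocallyCompactSpace U := hU.locallyCompactSpace
  let K := CompactExhaustion.choice U
  refine ⟨fun k => Subtype.val '' K k, fun i j hij => image_mono (K.subset hij),
    fun k => (K.isCompact k).image continuous_subtype_val,
    fun k => Subtype.coe_image_subset U _, fun T hT hTU => ?_⟩
  have hT' : IsCompact (Subtype.val ⁻¹' T : Set U) :=
    hU.isOpenEmbedding_subtypeVal.isInducing.isCompact_preimage' hT (by simpa using hTU)
  obtain ⟨m, hm⟩ := K.exists_superset_of_isCompact hT'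
  filter_upwards [eventually_gt_atTop m] with k hk x hx
  have hmk : K m ⊆ interior (K k) := (K.subset_interior_succ m).trans
    (interior_mono (K.subset hk))
  exact hU.isOpenMap_subtype_val.image_interior_subset (K k) ⟨⟨x, hTU hx⟩, hmk (hm hx), rfl⟩

lemma exists_contDiff_cutoff {E : Type*} [NormedAddCommGroup E] [NormedSpace ℝ E]
    [FiniteDimensional ℝ E] {m : ℕ∞} {K U : Set E} (hK : IsCompact K) (hU : IsOpen U)
    (hKU : K ⊆ U) :
    ∃ χ : E → ℝ, ContDiff ℝ m χ ∧ HasCompactSupport χ ∧ tsupport χ ⊆ U ∧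
      (∀ x, χ x ∈ Icc 0 1) ∧ ∀ x ∈ K, χ x = 1 := by
  obtain ⟨L, hL, hKL, hLU⟩ := exists_compact_between hK hU hKU
  obtain ⟨χ, hone, hzero, hmem⟩ := exists_contMDiffMap_one_nhds_of_subset_interior (n := m)
    (modelWithCornersSelf ℝ E) hK.isClosed hKL
  have hsupp : tsupport χ ⊆ L :=
    closure_minimal (fun x hx => not_imp_comm.1 (hzero x) hx) hL.isClosed
  exact ⟨χ, χ.contMDiff.contDiff, hL.of_isClosed_subset (isClosed_tsupport _) hsupp,
    hsupp.trans hLU, hmem, fun x hx => hone.self_of_nhdsSet x hx⟩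

end Exhaustion

section LayerCake

variable {α : Type*} [MeasurableSpace α] {μ : Measure α} {f g : α → ℝ}

lemma ofReal_integral_le_lintegral_ofReal (f : α → ℝ) :
    ENNReal.ofReal (∫ x, f x ∂μ) ≤ ∫⁻ x, ENNReal.ofReal (f x) ∂μ := by
  by_cases hf : Integrable f μ
  · rw [integral_eq_lintegral_pos_part_sub_lintegral_neg_part hf]
    exact (ENNReal.ofReal_le_ofReal (sub_le_self _ ENNReal.toReal_nonneg)).trans
      ENNReal.ofReal_toReal_le
  · simp [integral_undef hf]

lemma ae_forall_ae_ne [SFinite μ] (hf : AEMeasurable f μ) : ∀ᵐ t : ℝ, ∀ᵐ x ∂μ, f x ≠ t := by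
  have hcount : {t : ℝ | 0 < μ {x | f x = t}}.Countable :=
    Measure.countable_meas_level_set_pos₀ hf.nullMeasurable
  filter_upwards [measure_eq_zero_iff_ae_notMem.1 (hcount.measure_zero volume)] with t ht
  simpa [ae_iff] using ht

/-- The integrand of the signed layer cake formula `a = ∫ (χ_{t < a} - χ_{t < 0}) dt`, which,
unlike `χ_{t < a}`, is integrable in `t`. -/
noncomputable def signedLayer (a t : ℝ) : ℝ := (if t < a then 1 else 0) - if t < 0 then 1 else 0

lemma signedLayer_eq_indicator_sub (a : ℝ) :
    signedLayer a = (Ico 0 a).indicator 1 - (Ico a 0).indicator 1 := by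
  ext t
  simp only [signedLayer, Pi.sub_apply, indicator, mem_Ico, Pi.one_apply]
  grind

lemma integrable_indicator_Ico_one (a b : ℝ) : Integrable ((Ico a b).indicator (1 : ℝ → ℝ)) :=
  (integrable_indicator_iff measurableSet_Ico).2 (by simp [Pi.one_def])

lemma integrable_signedLayer (a : ℝ) : Integrable (signedLayer a) := by
  rw [signedLayer_eq_indicator_sub]
  exact (integrable_indicator_Ico_one 0 a).sub (integrable_indicator_Ico_one a 0)

lemma integral_signedLayer (a : ℝ) : ∫ t, signedLayer a t = a := by
  rw [signedLayer_eq_indicator_sub, integral_sub' (integrable_indicator_Ico_one 0 a)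
    (integrable_indicator_Ico_one a 0), integral_indicator_one measurableSet_Ico,
    integral_indicator_one measurableSet_Ico]
  rcases le_total 0 a with h | h <;> simp [Measure.real, h]

lemma norm_signedLayer (a t : ℝ) : ‖signedLayer a t‖ = SignType.sign a * signedLayer a t := by
  rcases lt_trichotomy a 0 with h | rfl | h <;>
    simp only [signedLayer, Real.norm_eq_abs] <;> split_ifs <;> simp [*] <;> linarith

lemma integral_norm_signedLayer (a : ℝ) : ∫ t, ‖signedLayer a t‖ = ‖a‖ := by
  simp only [norm_signedLayer, integral_const_mul, integral_signedLayer]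
  exact sign_mul_self a

lemma aemeasurable_signedLayer_prod (hf : AEMeasurable f μ) :
    AEMeasurable (fun p : α × ℝ => signedLayer (f p.1) p.2) (μ.prod volume) := by
  have hmeas : Measurable fun q : ℝ × ℝ => signedLayer q.1 q.2 :=
    (Measurable.ite (measurableSet_lt measurable_snd measurable_fst) measurable_const
      measurable_const).sub
    (Measurable.ite (measurableSet_lt measurable_snd measurable_const) measurable_const
      measurable_const)
  exact hmeas.comp_aemeasurable (hf.comp_fst.prodMk measurable_snd.aemeasurable)

lemma integral_mul_eq_integral_integral_signedLayer_mul [SFinite μ] (hf : AEMeasurable f μ)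
    (hg : AEStronglyMeasurable g μ) (hfg : Integrable (fun x => f x * g x) μ) :
    ∫ x, f x * g x ∂μ = ∫ t, ∫ x, signedLayer (f x) t * g x ∂μ := by
  have hint : Integrable (Function.uncurry fun x t => signedLayer (f x) t * g x)
      (μ.prod volume) := by
    refine (integrable_prod_iff ?_).2
      ⟨.of_forall fun x => (integrable_signedLayer (f x)).mul_const (g x), ?_⟩
    · exact (aemeasurable_signedLayer_prod hf).aestronglyMeasurable.mul hg.comp_fst
    · simpa only [Function.uncurry, norm_mul, integral_mul_const, integral_norm_signedLayer]
        using hfg.norm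
  rw [← integral_integral_swap hint]
  simp only [integral_mul_const, integral_signedLayer]

lemma integral_mul_eq_integral_integral_superlevel_mul [SFinite μ] (hf : AEMeasurable f μ)
    (hg : Integrable g μ) (hg0 : ∫ x, g x ∂μ = 0) (hfg : Integrable (fun x => f x * g x) μ) :
    ∫ x, f x * g x ∂μ = ∫ t, ∫ x, {x | t < f x}.indicator (fun _ => 1) x * g x ∂μ := by
  rw [integral_mul_eq_integral_integral_signedLayer_mul hf hg.1 hfg]
  congr with t
  have hsuper : Integrable (fun x => {x | t < f x}.indicator (fun _ => 1) x * g x) μ := by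
    have hset : NullMeasurableSet {x | t < f x} μ := nullMeasurableSet_lt aemeasurable_const hf
    refine (hg.indicator₀ hset).congr (.of_forall fun x => ?_)
    simp [indicator]
  calc ∫ x, signedLayer (f x) t * g x ∂μ
      = ∫ x, ({x | t < f x}.indicator (fun _ => 1) x * g x
          - (if t < 0 then 1 else 0) * g x) ∂μ := by
        simp only [signedLayer, sub_mul, indicator, mem_ofPred_eq]
    _ = ∫ x, {x | t < f x}.indicator (fun _ => 1) x * g x ∂μ := by
        rw [integral_sub hsuper (hg.const_mul _), integral_const_mul, hg0, mul_zero, sub_zero]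

end LayerCake

section SmoothStep

open Real (smoothTransition)

/-- A smooth approximation of the indicator of `(t, ∞)`, increasing from `0` to `1` on the
interval `[t, t + 1/c]`; it is used for large `c`. -/
noncomputable def smoothStep (c t a : ℝ) : ℝ := smoothTransition (c * (a - t))

lemma contDiff_smoothStep (c t : ℝ) {m : ℕ∞} : ContDiff ℝ m (smoothStep c t) :=
  Real.smoothTransition.contDiff.comp (by fun_prop)

lemma norm_smoothStep_le_one (c t a : ℝ) : ‖smoothStep c t a‖ ≤ 1 := by
  rw [smoothStep, Real.norm_of_nonneg (Real.smoothTransition.nonneg _)]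
  exact Real.smoothTransition.le_one _

lemma tendsto_smoothStep {c a : ℕ → ℝ} {b t : ℝ} (hc : Tendsto c atTop atTop)
    (ha : Tendsto a atTop (𝓝 b)) (hbt : b ≠ t) :
    Tendsto (fun k => smoothStep (c k) t (a k)) atTop (𝓝 (if t < b then 1 else 0)) := by
  have hat : Tendsto (fun k => a k - t) atTop (𝓝 (b - t)) := ha.sub_const t
  rcases hbt.lt_or_gt with h | h
  · rw [if_neg h.not_gt]
    refine tendsto_const_nhds.congr' ?_
    filter_upwards [(hc.atTop_mul_neg (sub_neg.2 h) hat).eventually_le_atBot 0] with k hk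
    exact (Real.smoothTransition.zero_of_nonpos hk).symm
  · rw [if_pos h]
    refine tendsto_const_nhds.congr' ?_
    filter_upwards [(hc.atTop_mul_pos (sub_pos.2 h) hat).eventually_ge_atTop 1] with k hk
    exact (Real.smoothTransition.one_of_one_le hk).symm

lemma continuous_deriv_smoothTransition : Continuous (deriv smoothTransition) :=
  (Real.smoothTransition.contDiff (n := 1)).continuous_deriv le_rfl

lemma hasDerivAt_smoothTransition (s : ℝ) :
    HasDerivAt smoothTransition (deriv smoothTransition s) s :=
  ((Real.smoothTransition.contDiff (n := 1)).differentiable one_ne_zero s).hasDerivAt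

lemma hasCompactSupport_deriv_smoothTransition :
    HasCompactSupport (deriv smoothTransition) := by
  refine HasCompactSupport.intro (isCompact_Icc (a := 0) (b := 1)) fun s hs => ?_
  rw [mem_Icc, not_and_or, not_le, not_le] at hs
  rcases hs with hs | hs
  · have : smoothTransition =ᶠ[𝓝 s] fun _ => 0 := by
      filter_upwards [Iio_mem_nhds hs] with r hr
      exact Real.smoothTransition.zero_of_nonpos (le_of_lt hr)
    simp [this.deriv_eq]
  · have : smoothTransition =ᶠ[𝓝 s] fun _ => 1 := by
      filter_upwards [Ioi_mem_nhds hs] with r hr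
      exact Real.smoothTransition.one_of_one_le (le_of_lt hr)
    simp [this.deriv_eq]

lemma integrable_deriv_smoothTransition : Integrable (deriv smoothTransition) :=
  continuous_deriv_smoothTransition.integrable_of_hasCompactSupport
    hasCompactSupport_deriv_smoothTransition

lemma integral_deriv_smoothTransition : ∫ s, deriv smoothTransition s = 1 := by
  have hbot : Tendsto smoothTransition atBot (𝓝 0) := by
    refine tendsto_const_nhds.congr' ?_
    filter_upwards [eventually_le_atBot 0] with s hs
    exact (Real.smoothTransition.zero_of_nonpos hs).symm
  have htop : Tendsto smoothTransition atTop (𝓝 1) := by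
    refine tendsto_const_nhds.congr' ?_
    filter_upwards [eventually_ge_atTop 1] with s hs
    exact (Real.smoothTransition.one_of_one_le hs).symm
  simpa using integral_of_hasDerivAt_of_tendsto hasDerivAt_smoothTransition
    integrable_deriv_smoothTransition hbot htop

lemma deriv_smoothStep (c t a : ℝ) :
    deriv (smoothStep c t) a = c * deriv smoothTransition (c * (a - t)) := by
  have hinner : HasDerivAt (fun a => c * (a - t)) c a := by
    simpa using ((hasDerivAt_id a).sub_const t).const_mul c
  rw [mul_comm]
  exact ((hasDerivAt_smoothTransition _).comp a hinner).deriv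

lemma measurable_deriv_smoothStep (c : ℝ) :
    Measurable fun p : ℝ × ℝ => deriv (smoothStep c p.2) p.1 := by
  have := continuous_deriv_smoothTransition
  simp only [deriv_smoothStep]
  fun_prop

variable {c : ℝ}

lemma deriv_smoothStep_nonneg (hc : 0 ≤ c) (t a : ℝ) : 0 ≤ deriv (smoothStep c t) a := by
  rw [deriv_smoothStep]
  exact mul_nonneg hc Real.smoothTransition.monotone.deriv_nonneg

lemma lintegral_enorm_deriv_smoothStep (hc : 0 < c) (a : ℝ) :
    ∫⁻ t, ‖deriv (smoothStep c t) a‖ₑ = 1 := by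
  have hint : Integrable fun s => c * deriv smoothTransition (c * s) :=
    (integrable_deriv_smoothTransition.comp_mul_left' hc.ne').const_mul c
  simp only [Real.enorm_of_nonneg (deriv_smoothStep_nonneg hc.le _ a)]
  simp only [deriv_smoothStep]
  rw [lintegral_sub_left_eq_self
      (fun s => ENNReal.ofReal (c * deriv smoothTransition (c * s))) a,
    ← ofReal_integral_eq_lintegral_ofReal hint
      (.of_forall fun s => mul_nonneg hc.le Real.smoothTransition.monotone.deriv_nonneg),
    integral_const_mul, Measure.integral_comp_mul_left, integral_deriv_smoothTransition]
  simp [abs_of_pos hc, hc.ne']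

variable {α : Type*} [MeasurableSpace α] {f : α → ℝ} {g : α → ℝ≥0∞}

lemma measurable_enorm_deriv_smoothStep_mul (c : ℝ) (hf : Measurable f) (hg : Measurable g) :
    Measurable fun p : ℝ × α => ‖deriv (smoothStep c p.1) (f p.2)‖ₑ * g p.2 :=
  ((measurable_deriv_smoothStep c).comp ((hf.comp measurable_snd).prodMk measurable_fst)).enorm.mul
    (hg.comp measurable_snd)

lemma lintegral_lintegral_deriv_smoothStep_mul {μ : Measure α} [SFinite μ] (hc : 0 < c)
    (hf : Measurable f) (hg : Measurable g) :
    ∫⁻ t, ∫⁻ x, ‖deriv (smoothStep c t) (f x)‖ₑ * g x ∂μ = ∫⁻ x, g x ∂μ := by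
  have hmeas := measurable_enorm_deriv_smoothStep_mul c hf hg
  rw [lintegral_lintegral_swap hmeas.aemeasurable]
  refine lintegral_congr fun x => ?_
  have hslice : Measurable fun t => ‖deriv (smoothStep c t) (f x)‖ₑ :=
    ((measurable_deriv_smoothStep c).comp (measurable_const.prodMk measurable_id)).enorm
  rw [lintegral_mul_const _ hslice, lintegral_enorm_deriv_smoothStep hc, one_mul]

end SmoothStep

section Divergence

lemma integral_fderiv_apply_eq_zero {E F : Type*} [NormedAddCommGroup E] [NormedSpace ℝ E]
    [FiniteDimensional ℝ E] [MeasurableSpace E] [BorelSpace E] [NormedAddCommGroup F]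
    [NormedSpace ℝ F] (μ : Measure E) [μ.IsAddHaarMeasure] {f : E → F} (hf : ContDiff ℝ 1 f)
    (hc : HasCompactSupport f) (v : E) : ∫ x, fderiv ℝ f x v ∂μ = 0 := by
  have hf' : Continuous fun x => fderiv ℝ f x v :=
    (hf.continuous_fderiv one_ne_zero).clm_apply continuous_const
  have hparts := integral_smul_fderiv_eq_neg_fderiv_smul_of_integrable (μ := μ)
    (f := fun _ => (1 : ℝ)) (g := f) (v := v) (by simp)
    (by simpa using hf'.integrable_of_hasCompactSupport (hc.fderiv_apply ℝ v))
    (by simpa using hf.continuous.integrable_of_hasCompactSupport hc)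
    (fun _ _ => differentiableAt_const _) (fun x _ => hf.differentiable one_ne_zero x)
  simpa using hparts

variable {n : ℕ} {φ : EuclideanSpace ℝ (Fin n) → EuclideanSpace ℝ (Fin n)}

lemma divg_apply (φ : EuclideanSpace ℝ (Fin n) → EuclideanSpace ℝ (Fin n))
    (x : EuclideanSpace ℝ (Fin n)) :
    divg φ x = ∑ i, fderiv ℝ φ x (EuclideanSpace.single i 1) i := by
  simp [divg, EuclideanSpace.inner_single_right]

lemma continuous_divg (hφ : ContDiff ℝ 1 φ) : Continuous (divg φ) := by
  have := hφ.continuous_fderiv one_ne_zero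
  unfold divg
  fun_prop

lemma divg_eq_zero_of_notMem_tsupport {x : EuclideanSpace ℝ (Fin n)} (hx : x ∉ tsupport φ) :
    divg φ x = 0 := by
  have hφx : fderiv ℝ φ x = 0 :=
    image_eq_zero_of_notMem_tsupport fun h => hx (tsupport_fderiv_subset ℝ h)
  simp [divg, hφx]

lemma hasCompactSupport_divg (hc : HasCompactSupport φ) : HasCompactSupport (divg φ) :=
  HasCompactSupport.intro hc fun _ => divg_eq_zero_of_notMem_tsupport

lemma integrable_divg (hφ : ContDiff ℝ 1 φ) (hc : HasCompactSupport φ) : Integrable (divg φ) :=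
  (continuous_divg hφ).integrable_of_hasCompactSupport (hasCompactSupport_divg hc)

lemma divg_comp_add_right (y x : EuclideanSpace ℝ (Fin n)) :
    divg (fun z => φ (z + y)) x = divg φ (x + y) := by
  simp [divg, fderiv_comp_add_right]

lemma divg_smul {w : EuclideanSpace ℝ (Fin n) → ℝ} {x : EuclideanSpace ℝ (Fin n)}
    (hw : DifferentiableAt ℝ w x) (hφ : DifferentiableAt ℝ φ x) :
    divg (fun z => w z • φ z) x = w x * divg φ x + fderiv ℝ w x (φ x) := by
  have hexpand : fderiv ℝ w x (φ x) = ∑ i, fderiv ℝ w x (EuclideanSpace.single i 1) * φ x i := by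
    conv_lhs => rw [← (EuclideanSpace.basisFun (Fin n) ℝ).sum_repr (φ x)]
    simp [mul_comm]
  simp [divg_apply, fderiv_fun_smul hw hφ, Finset.sum_add_distrib, Finset.mul_sum, hexpand]

theorem integral_divg (hφ : ContDiff ℝ 1 φ) (hc : HasCompactSupport φ) : ∫ x, divg φ x = 0 := by
  have hint (i : Fin n) : Integrable fun x => fderiv ℝ φ x (EuclideanSpace.single i 1) :=
    ((hφ.continuous_fderiv one_ne_zero).clm_apply continuous_const).integrable_of_hasCompactSupport
      (hc.fderiv_apply ℝ _)
  unfold divg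
  rw [integral_finsetSum _ fun i _ => (hint i).inner_const _]
  refine Finset.sum_eq_zero fun i _ => ?_
  simp_rw [real_inner_comm]
  rw [integral_inner (hint i), integral_fderiv_apply_eq_zero volume hφ hc, inner_zero_right]

theorem integral_mul_divg {w : EuclideanSpace ℝ (Fin n) → ℝ} (hw : ContDiff ℝ 1 w)
    (hφ : ContDiff ℝ 1 φ) (hc : HasCompactSupport φ) :
    ∫ x, w x * divg φ x = -∫ x, fderiv ℝ w x (φ x) := by
  have hw_int : Integrable fun x => w x * divg φ x :=
    (hw.continuous.mul (continuous_divg hφ)).integrable_of_hasCompactSupport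
      (hasCompactSupport_divg hc).mul_left
  have hdw_int : Integrable fun x => fderiv ℝ w x (φ x) :=
    ((hw.continuous_fderiv one_ne_zero).clm_apply hφ.continuous).integrable_of_hasCompactSupport
      (hc.mono fun x hx hφx => hx (by simp [hφx]))
  rw [eq_neg_iff_add_eq_zero, ← integral_add hw_int hdw_int, ← integral_divg (hw.smul hφ)
    hc.smul_left]
  exact integral_congr_ae (.of_forall fun x => (divg_smul (hw.differentiable one_ne_zero x)
    (hφ.differentiable one_ne_zero x)).symm)

lemma setIntegral_mul_divg {U : Set (EuclideanSpace ℝ (Fin n))} (hs : tsupport φ ⊆ U)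
    (u : EuclideanSpace ℝ (Fin n) → ℝ) :
    ∫ x in U, u x * divg φ x = ∫ x, u x * divg φ x :=
  setIntegral_eq_integral_of_forall_compl_eq_zero fun x hx => by
    simp [divg_eq_zero_of_notMem_tsupport fun h => hx (hs h)]

end Divergence

section Variation

variable {n : ℕ} {U V : Set (EuclideanSpace ℝ (Fin n))} {u : EuclideanSpace ℝ (Fin n) → ℝ}
  {φ : EuclideanSpace ℝ (Fin n) → EuclideanSpace ℝ (Fin n)}

/-- The vector fields `φ ∈ C¹_c(U, ℝⁿ)` with `|φ| ≤ 1` against which the variation in `U` is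
tested. -/
structure IsTestField (U : Set (EuclideanSpace ℝ (Fin n)))
    (φ : EuclideanSpace ℝ (Fin n) → EuclideanSpace ℝ (Fin n)) : Prop where
  contDiff : ContDiff ℝ 1 φ
  hasCompactSupport : HasCompactSupport φ
  tsupport_subset : tsupport φ ⊆ U
  norm_le_one : ∀ x, ‖φ x‖ ≤ 1

lemma variationOn_le_iff {C : ℝ≥0∞} :
    variationOn U u ≤ C ↔
      ∀ φ, IsTestField U φ → ENNReal.ofReal (∫ x in U, u x * divg φ x) ≤ C := by
  simp only [variationOn, iSup_le_iff]
  exact ⟨fun h φ hφ => h φ hφ.1 hφ.2 hφ.3 hφ.4, fun h φ h1 h2 h3 h4 => h φ ⟨h1, h2, h3, h4⟩⟩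

lemma IsTestField.ofReal_integral_le (hφ : IsTestField U φ)
    (u : EuclideanSpace ℝ (Fin n) → ℝ) :
    ENNReal.ofReal (∫ x, u x * divg φ x) ≤ variationOn U u := by
  rw [← setIntegral_mul_divg hφ.tsupport_subset]
  exact variationOn_le_iff.1 le_rfl φ hφ

lemma IsTestField.integrable_mul_divg (hφ : IsTestField U φ) (hu : LocallyIntegrableOn u U) :
    Integrable fun x => u x * divg φ x := by
  have hu_supp : IntegrableOn u (tsupport φ) :=
    hu.integrableOn_compact_subset hφ.tsupport_subset hφ.hasCompactSupport
  refine (integrableOn_iff_integrable_of_support_subset (s := tsupport φ) fun x hx => ?_).1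
    (hu_supp.mul_continuousOn (continuous_divg hφ.contDiff).continuousOn hφ.hasCompactSupport)
  exact not_imp_comm.1 divg_eq_zero_of_notMem_tsupport (right_ne_zero_of_mul hx)

lemma IsTestField.mono (hφ : IsTestField V φ) (hVU : V ⊆ U) : IsTestField U φ :=
  { hφ with tsupport_subset := hφ.tsupport_subset.trans hVU }

lemma IsTestField.comp_add_right (hφ : IsTestField V φ) {y : EuclideanSpace ℝ (Fin n)} {r : ℝ}
    (hy : ‖y‖ ≤ r) (hVU : cthickening r V ⊆ U) : IsTestField U fun x => φ (x + y) where
  contDiff := hφ.contDiff.comp (by fun_prop)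
  hasCompactSupport := hφ.hasCompactSupport.comp_homeomorph (Homeomorph.addRight y)
  tsupport_subset := by
    have htrans : tsupport (fun x => φ (x + y)) = Homeomorph.addRight y ⁻¹' tsupport φ :=
      tsupport_comp_eq_preimage φ (Homeomorph.addRight y)
    rw [htrans]
    exact fun x hx => hVU <| mem_cthickening_of_dist_le x (x + y) _ _ (hφ.tsupport_subset hx) <| by
      simpa [dist_eq_norm] using hy
  norm_le_one x := hφ.norm_le_one _

lemma variationOn_mono (u : EuclideanSpace ℝ (Fin n) → ℝ) (hVU : V ⊆ U) :
    variationOn V u ≤ variationOn U u :=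
  variationOn_le_iff.2 fun φ hφ => by
    rw [setIntegral_mul_divg hφ.tsupport_subset]
    exact (hφ.mono hVU).ofReal_integral_le u

lemma variationOn_congr {w : EuclideanSpace ℝ (Fin n) → ℝ} (hU : MeasurableSet U)
    (h : EqOn u w U) : variationOn U u = variationOn U w := by
  have hint (φ : EuclideanSpace ℝ (Fin n) → EuclideanSpace ℝ (Fin n)) :
      ∫ x in U, u x * divg φ x = ∫ x in U, w x * divg φ x :=
    setIntegral_congr_fun hU fun x hx => by simp only [h hx]
  simp only [variationOn, hint]

lemma perimeterIn_congr {A B : Set (EuclideanSpace ℝ (Fin n))} (hU : MeasurableSet U)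
    (h : ∀ x ∈ U, x ∈ A ↔ x ∈ B) : perimeterIn U A = perimeterIn U B :=
  variationOn_congr hU fun x hx => indicator_eq_indicator (h x hx) rfl

lemma variationOn_le_liminf_of_exhaustion {K : ℕ → Set (EuclideanSpace ℝ (Fin n))}
    (hK : ∀ T, IsCompact T → T ⊆ U → ∀ᶠ k in atTop, T ⊆ interior (K k))
    (u : EuclideanSpace ℝ (Fin n) → ℝ) :
    variationOn U u ≤ liminf (fun k => variationOn (interior (K k)) u) atTop := by
  refine variationOn_le_iff.2 fun φ hφ => le_liminf_of_le (by isBoundedDefault) ?_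
  filter_upwards [hK _ hφ.hasCompactSupport hφ.tsupport_subset] with k hk
  rw [setIntegral_mul_divg hφ.tsupport_subset]
  exact IsTestField.ofReal_integral_le { hφ with tsupport_subset := hk } u

theorem variationOn_le_liminf {w : ℕ → EuclideanSpace ℝ (Fin n) → ℝ} {C : ℝ}
    (hw : ∀ k, AEStronglyMeasurable (w k) (volume.restrict U)) (hC : ∀ k x, ‖w k x‖ ≤ C)
    (hlim : ∀ᵐ x ∂volume.restrict U, Tendsto (fun k => w k x) atTop (𝓝 (u x))) :
    variationOn U u ≤ liminf (fun k => variationOn U (w k)) atTop := by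
  refine variationOn_le_iff.2 fun φ hφ => ?_
  have hdiv : Integrable (divg φ) (volume.restrict U) :=
    (integrable_divg hφ.contDiff hφ.hasCompactSupport).integrableOn
  have htend : Tendsto (fun k => ∫ x in U, w k x * divg φ x) atTop
      (𝓝 (∫ x in U, u x * divg φ x)) := by
    refine tendsto_integral_of_dominated_convergence (fun x => C * ‖divg φ x‖)
      (fun k => (hw k).mul hdiv.1) (hdiv.norm.const_mul C) (fun k => .of_forall fun x => ?_)
      (hlim.mono fun x hx => hx.mul_const _)
    rw [norm_mul]
    exact mul_le_mul_of_nonneg_right (hC k x) (norm_nonneg _)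
  rw [← ((ENNReal.continuous_ofReal.tendsto _).comp htend).liminf_eq]
  exact liminf_le_liminf (.of_forall fun k => variationOn_le_iff.1 le_rfl φ hφ)

end Variation

section SmoothVariation

lemma norm_sub_one_le_inner_univUnitBall {E : Type*} [NormedAddCommGroup E]
    [InnerProductSpace ℝ E] (a : E) :
    ‖a‖ - 1 ≤ ⟪a, OpenPartialHomeomorph.univUnitBall a⟫ := by
  have hsqrt_pos : 0 < √(1 + ‖a‖ ^ 2) := by positivity
  have hnorm_le : ‖a‖ ≤ √(1 + ‖a‖ ^ 2) := Real.le_sqrt_of_sq_le (by linarith)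
  have hle_norm : √(1 + ‖a‖ ^ 2) ≤ 1 + ‖a‖ :=
    Real.sqrt_le_iff.2 ⟨by positivity, by nlinarith [norm_nonneg a]⟩
  rw [OpenPartialHomeomorph.univUnitBall_apply, real_inner_smul_right, real_inner_self_eq_norm_sq,
    inv_mul_eq_div, le_div_iff₀ hsqrt_pos]
  nlinarith [norm_nonneg a]

lemma norm_univUnitBall_le_one {E : Type*} [NormedAddCommGroup E] [NormedSpace ℝ E] (a : E) :
    ‖OpenPartialHomeomorph.univUnitBall a‖ ≤ 1 := by
  have hmem := OpenPartialHomeomorph.univUnitBall.map_source (mem_univ a)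
  exact (mem_ball_zero_iff.1 hmem).le

variable {n : ℕ} {U : Set (EuclideanSpace ℝ (Fin n))} {v χ : EuclideanSpace ℝ (Fin n) → ℝ}

theorem variationOn_le_lintegral_enorm_fderiv (hv : ContDiff ℝ 1 v) :
    variationOn U v ≤ ∫⁻ x in U, ‖fderiv ℝ v x‖ₑ := by
  refine variationOn_le_iff.2 fun φ hφ => ?_
  have hzero (x) (hx : x ∉ U) : fderiv ℝ v x (φ x) = 0 := by
    rw [image_eq_zero_of_notMem_tsupport fun h => hx (hφ.tsupport_subset h), map_zero]
  rw [setIntegral_mul_divg hφ.tsupport_subset, integral_mul_divg hv hφ.contDiff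
    hφ.hasCompactSupport, ← setIntegral_eq_integral_of_forall_compl_eq_zero hzero]
  calc ENNReal.ofReal (-∫ x in U, fderiv ℝ v x (φ x))
      ≤ ‖∫ x in U, fderiv ℝ v x (φ x)‖ₑ := by
        rw [← enorm_neg]
        exact Real.ofReal_le_enorm _
    _ ≤ ∫⁻ x in U, ‖fderiv ℝ v x (φ x)‖ₑ := enorm_integral_le_lintegral_enorm _
    _ ≤ ∫⁻ x in U, ‖fderiv ℝ v x‖ₑ := lintegral_mono fun x => by
        rw [enorm_le_iff_norm_le]
        exact (fderiv ℝ v x).unit_le_opNorm _ (hφ.norm_le_one x)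

lemma contDiff_gradient {E : Type*} [NormedAddCommGroup E] [InnerProductSpace ℝ E]
    [CompleteSpace E] {m k : WithTop ℕ∞} {v : E → ℝ} (hv : ContDiff ℝ k v) (hmk : m + 1 ≤ k) :
    ContDiff ℝ m (gradient v) :=
  (InnerProductSpace.toDual ℝ E).symm.contDiff.comp (hv.fderiv_right hmk)

/-- An almost optimal field in the definition of the variation of `v`: a cutoff of
`-∇v / √(δ² + |∇v|²)`. -/
noncomputable def nearOptimalField (δ : ℝ) (v χ : EuclideanSpace ℝ (Fin n) → ℝ)
    (x : EuclideanSpace ℝ (Fin n)) : EuclideanSpace ℝ (Fin n) :=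
  -(χ x • OpenPartialHomeomorph.univUnitBall (δ⁻¹ • gradient v x))

lemma isTestField_nearOptimalField (δ : ℝ) (hv : ContDiff ℝ 2 v) (hχ : ContDiff ℝ 1 χ)
    (hc : HasCompactSupport χ) (hs : tsupport χ ⊆ U) (hmem : ∀ x, χ x ∈ Icc 0 1) :
    IsTestField U (nearOptimalField δ v χ) := by
  have hsub : tsupport (nearOptimalField δ v χ) ⊆ tsupport χ :=
    closure_mono fun x hx hχx => hx (by simp [nearOptimalField, hχx])
  refine ⟨?_, hc.of_isClosed_subset (isClosed_tsupport _) hsub, hsub.trans hs, fun x => ?_⟩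
  · exact (hχ.smul (OpenPartialHomeomorph.contDiff_univUnitBall.comp
      ((contDiff_gradient hv (by norm_num)).const_smul δ⁻¹))).neg
  · rw [nearOptimalField, norm_neg, norm_smul, Real.norm_of_nonneg (hmem x).1]
    exact mul_le_one₀ (hmem x).2 (norm_nonneg _) (norm_univUnitBall_le_one _)

lemma mul_norm_fderiv_sub_le_neg_fderiv_nearOptimalField {δ : ℝ} (hδ : 0 < δ)
    {x : EuclideanSpace ℝ (Fin n)} (hχ : 0 ≤ χ x) :
    χ x * ‖fderiv ℝ v x‖ - δ * χ x ≤ -fderiv ℝ v x (nearOptimalField δ v χ x) := by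
  have hnorm : ‖gradient v x‖ = ‖fderiv ℝ v x‖ :=
    (InnerProductSpace.toDual ℝ (EuclideanSpace ℝ (Fin n))).symm.norm_map _
  set ν := OpenPartialHomeomorph.univUnitBall (δ⁻¹ • gradient v x) with hν
  have hinner : fderiv ℝ v x ν = ⟪gradient v x, ν⟫ :=
    (InnerProductSpace.toDual_symm_apply (𝕜 := ℝ)).symm
  have hball := norm_sub_one_le_inner_univUnitBall (δ⁻¹ • gradient v x)
  rw [← hν, norm_smul, norm_inv, Real.norm_of_nonneg hδ.le, real_inner_smul_left, hnorm,
    ← hinner, ← mul_le_mul_iff_right₀ hδ, mul_sub, mul_one, mul_inv_cancel_left₀ hδ.ne',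
    mul_inv_cancel_left₀ hδ.ne'] at hball
  calc χ x * ‖fderiv ℝ v x‖ - δ * χ x = χ x * (‖fderiv ℝ v x‖ - δ) := by ring
    _ ≤ χ x * fderiv ℝ v x ν := by gcongr
    _ = -fderiv ℝ v x (nearOptimalField δ v χ x) := by simp [nearOptimalField, hν]

lemma ofReal_integral_mul_norm_fderiv_le_variationOn (hv : ContDiff ℝ 2 v) (hχ : ContDiff ℝ 1 χ)
    (hc : HasCompactSupport χ) (hs : tsupport χ ⊆ U) (hmem : ∀ x, χ x ∈ Icc 0 1) :
    ENNReal.ofReal (∫ x, χ x * ‖fderiv ℝ v x‖) ≤ variationOn U v := by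
  have hdv : Continuous (fderiv ℝ v) := hv.continuous_fderiv two_ne_zero
  have hχ_int : Integrable χ := hχ.continuous.integrable_of_hasCompactSupport hc
  have hχdv_int : Integrable fun x => χ x * ‖fderiv ℝ v x‖ :=
    (hχ.continuous.mul hdv.norm).integrable_of_hasCompactSupport hc.mul_right
  have hδ_le (δ : ℝ) (hδ : 0 < δ) :
      ENNReal.ofReal ((∫ x, χ x * ‖fderiv ℝ v x‖) - δ * ∫ x, χ x) ≤ variationOn U v := by
    have hφ := isTestField_nearOptimalField δ hv hχ hc hs hmem
    refine le_trans (ENNReal.ofReal_le_ofReal ?_) (hφ.ofReal_integral_le v)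
    rw [integral_mul_divg (hv.of_le one_le_two) hφ.contDiff hφ.hasCompactSupport,
      ← integral_const_mul, ← integral_sub hχdv_int (hχ_int.const_mul δ), ← integral_neg]
    refine integral_mono (hχdv_int.sub (hχ_int.const_mul δ)) (Integrable.neg ?_) fun x =>
      mul_norm_fderiv_sub_le_neg_fderiv_nearOptimalField hδ (hmem x).1
    exact (hdv.clm_apply hφ.contDiff.continuous).integrable_of_hasCompactSupport
      (hφ.hasCompactSupport.mono fun x hx h => hx (by simp [h]))
  have hlim : Tendsto (fun δ : ℝ => ENNReal.ofReal ((∫ x, χ x * ‖fderiv ℝ v x‖) - δ * ∫ x, χ x))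
      (𝓝[>] 0) (𝓝 (ENNReal.ofReal (∫ x, χ x * ‖fderiv ℝ v x‖))) := by
    refine tendsto_nhdsWithin_of_tendsto_nhds ?_
    refine Continuous.tendsto' (ENNReal.continuous_ofReal.comp (by fun_prop)) _ _ (by simp)
  exact le_of_tendsto hlim (eventually_mem_nhdsWithin.mono hδ_le)

lemma setLIntegral_enorm_fderiv_le_variationOn_of_isCompact (hU : IsOpen U)
    (hv : ContDiff ℝ 2 v) {K : Set (EuclideanSpace ℝ (Fin n))} (hK : IsCompact K) (hKU : K ⊆ U) :
    ∫⁻ x in K, ‖fderiv ℝ v x‖ₑ ≤ variationOn U v := by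
  obtain ⟨χ, hχ, hc, hs, hmem, hone⟩ := exists_contDiff_cutoff (m := 1) hK hU hKU
  have hint : Integrable fun x => χ x * ‖fderiv ℝ v x‖ :=
    (hχ.continuous.mul (hv.continuous_fderiv two_ne_zero).norm).integrable_of_hasCompactSupport
      hc.mul_right
  calc ∫⁻ x in K, ‖fderiv ℝ v x‖ₑ
      = ∫⁻ x in K, ENNReal.ofReal (χ x * ‖fderiv ℝ v x‖) :=
        setLIntegral_congr_fun hK.measurableSet fun x hx => by simp [hone x hx]
    _ ≤ ∫⁻ x, ENNReal.ofReal (χ x * ‖fderiv ℝ v x‖) := setLIntegral_le_lintegral _ _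
    _ = ENNReal.ofReal (∫ x, χ x * ‖fderiv ℝ v x‖) :=
        (ofReal_integral_eq_lintegral_ofReal hint
          (.of_forall fun x => mul_nonneg (hmem x).1 (norm_nonneg _))).symm
    _ ≤ variationOn U v := ofReal_integral_mul_norm_fderiv_le_variationOn hv hχ hc hs hmem

theorem lintegral_enorm_fderiv_le_variationOn (hU : IsOpen U) (hv : ContDiff ℝ 2 v) :
    ∫⁻ x in U, ‖fderiv ℝ v x‖ₑ ≤ variationOn U v := by
  obtain ⟨K, hKmono, hKc, hKU, hKT⟩ := exists_monotone_isCompact_exhaustion hU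
  have hUK : U = ⋃ k, K k := by
    refine subset_antisymm (fun x hx => ?_) (iUnion_subset hKU)
    obtain ⟨k, hk⟩ := (hKT {x} isCompact_singleton (singleton_subset_iff.2 hx)).exists
    exact mem_iUnion.2 ⟨k, interior_subset (hk rfl)⟩
  calc ∫⁻ x in U, ‖fderiv ℝ v x‖ₑ = ⨆ k, ∫⁻ x in K k, ‖fderiv ℝ v x‖ₑ := by
        rw [hUK, setLIntegral_iUnion_of_directed _ hKmono.directed_le]
    _ ≤ variationOn U v := iSup_le fun k =>
        setLIntegral_enorm_fderiv_le_variationOn_of_isCompact hU hv (hKc k) (hKU k)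

end SmoothVariation

section Mollification

variable {E : Type*} [NormedAddCommGroup E] [NormedSpace ℝ E] [FiniteDimensional ℝ E]
  [MeasurableSpace E] [BorelSpace E] {μ : Measure E} [μ.IsAddHaarMeasure]
  {u : E → ℝ} {ρ : ContDiffBump (0 : E)}

/-- The mollification `ρ ⋆ u` of `u` by the bump function `ρ`, normalized to have integral `1`. -/
noncomputable def mollify (μ : Measure E) (ρ : ContDiffBump (0 : E)) (u : E → ℝ) : E → ℝ :=
  ρ.normed μ ⋆[ContinuousLinearMap.lsmul ℝ ℝ, μ] u

lemma contDiff_mollify (ρ : ContDiffBump (0 : E)) (hu : LocallyIntegrable u μ) {m : ℕ∞} :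
    ContDiff ℝ m (mollify μ ρ u) :=
  ρ.hasCompactSupport_normed.contDiff_convolution_left _ ρ.contDiff_normed hu

lemma exists_seq_ae_tendsto_mollify (hu : LocallyIntegrable u μ) :
    ∃ ρ : ℕ → ContDiffBump (0 : E), Tendsto (fun k => (ρ k).rOut) atTop (𝓝 0) ∧
      ∀ᵐ x ∂μ, Tendsto (fun k => mollify μ (ρ k) u x) atTop (𝓝 (u x)) := by
  have hr (k : ℕ) : 0 < 1 / ((k : ℝ) + 1) := Nat.one_div_pos_of_nat
  let ρ (k : ℕ) : ContDiffBump (0 : E) :=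
    ⟨1 / (k + 1) / 2, 1 / (k + 1), half_pos (hr k), half_lt_self (hr k)⟩
  have hρ : Tendsto (fun k => (ρ k).rOut) atTop (𝓝 0) := tendsto_one_div_add_atTop_nhds_zero_nat
  exact ⟨ρ, hρ, ContDiffBump.ae_convolution_tendsto_right_of_locallyIntegrable (K := 2) hρ
    (.of_forall fun k => (mul_div_cancel₀ (ρ k).rOut two_ne_zero).ge) hu⟩

lemma integral_mollify_mul_le (hu : Integrable u μ) {g : E → ℝ} {M C : ℝ}
    (hg : AEStronglyMeasurable g μ) (hgM : ∀ x, ‖g x‖ ≤ M)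
    (hC : ∀ y, ‖y‖ < ρ.rOut → ∫ x, u (x - y) * g x ∂μ ≤ C) :
    ∫ x, mollify μ ρ u x * g x ∂μ ≤ C := by
  have hρ : Integrable (ρ.normed μ) μ := ρ.integrable_normed
  have hint : Integrable (Function.uncurry fun x y => ρ.normed μ y * u (x - y) * g x)
      (μ.prod μ) :=
    (hρ.convolution_integrand (ContinuousLinearMap.lsmul ℝ ℝ) hu).mul_bdd (c := M)
      hg.comp_fst (.of_forall fun _ => hgM _)
  have hint_slice : Integrable (fun y => ρ.normed μ y * ∫ x, u (x - y) * g x ∂μ) μ := by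
    simpa only [Function.uncurry, mul_assoc, integral_const_mul] using hint.integral_prod_right
  calc ∫ x, mollify μ ρ u x * g x ∂μ = ∫ x, ∫ y, ρ.normed μ y * u (x - y) * g x ∂μ ∂μ := by
        simp only [mollify, convolution_def, integral_mul_const, ContinuousLinearMap.lsmul_apply,
          smul_eq_mul]
    _ = ∫ y, ρ.normed μ y * ∫ x, u (x - y) * g x ∂μ ∂μ := by
        rw [integral_integral_swap hint]
        simp only [mul_assoc, integral_const_mul]
    _ ≤ ∫ y, ρ.normed μ y * C ∂μ := by
        refine integral_mono hint_slice (hρ.mul_const C) fun y => ?_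
        rcases lt_or_ge ‖y‖ ρ.rOut with hy | hy
        · exact mul_le_mul_of_nonneg_left (hC y hy) (ρ.nonneg_normed y)
        · have hy0 : ρ.normed μ y = 0 := by
            rw [← Function.notMem_support, ρ.support_normed_eq]
            simpa using hy
          simp [hy0]
    _ = C := by rw [integral_mul_const, ρ.integral_normed, one_mul]

end Mollification

section Coarea

variable {n : ℕ} {U V K : Set (EuclideanSpace ℝ (Fin n))} {u v : EuclideanSpace ℝ (Fin n) → ℝ}

theorem variationOn_mollify_le {ρ : ContDiffBump (0 : EuclideanSpace ℝ (Fin n))}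
    (hu : Integrable u) (hVU : cthickening ρ.rOut V ⊆ U) :
    variationOn V (mollify volume ρ u) ≤ variationOn U u := by
  rcases eq_or_ne (variationOn U u) ⊤ with htop | hfin
  · exact htop ▸ le_top
  refine variationOn_le_iff.2 fun φ hφ => ?_
  have hdiv : Continuous (divg φ) := continuous_divg hφ.contDiff
  obtain ⟨M, hM⟩ :=
    hdiv.bounded_above_of_compact_support (hasCompactSupport_divg hφ.hasCompactSupport)
  rw [setIntegral_mul_divg hφ.tsupport_subset, ENNReal.ofReal_le_iff_le_toReal hfin]
  refine integral_mollify_mul_le hu hdiv.aestronglyMeasurable hM fun y hy => ?_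
  calc ∫ x, u (x - y) * divg φ x = ∫ x, u (x + y - y) * divg φ (x + y) :=
        (integral_add_right_eq_self (fun x => u (x - y) * divg φ x) y).symm
    _ = ∫ x, u x * divg (fun z => φ (z + y)) x := by
        simp only [add_sub_cancel_right, divg_comp_add_right]
    _ ≤ (variationOn U u).toReal :=
        (ENNReal.ofReal_le_iff_le_toReal hfin).1
          ((hφ.comp_add_right hy.le hVU).ofReal_integral_le u)

lemma variationOn_smoothStep_comp_le (c t : ℝ) (hv : ContDiff ℝ 1 v) :
    variationOn V (smoothStep c t ∘ v) ≤
      ∫⁻ x in V, ‖deriv (smoothStep c t) (v x)‖ₑ * ‖fderiv ℝ v x‖ₑ := by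
  have hstep : ContDiff ℝ 1 (smoothStep c t) := contDiff_smoothStep c t
  refine (variationOn_le_lintegral_enorm_fderiv (hstep.comp hv)).trans_eq
    (lintegral_congr fun x => ?_)
  rw [← enorm_smul, ((hstep.differentiable one_ne_zero _).hasDerivAt.comp_hasFDerivAt x
    (hv.differentiable one_ne_zero x).hasFDerivAt).fderiv]

lemma perimeterIn_superlevel_le_liminf {v : ℕ → EuclideanSpace ℝ (Fin n) → ℝ} {c : ℕ → ℝ}
    {t : ℝ} (hv : ∀ k, ContDiff ℝ 1 (v k)) (hc : Tendsto c atTop atTop)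
    (hlim : ∀ᵐ x ∂volume.restrict V, Tendsto (fun k => v k x) atTop (𝓝 (u x)))
    (ht : ∀ᵐ x ∂volume.restrict V, u x ≠ t) :
    perimeterIn V {x | t < u x} ≤ liminf (fun k =>
      ∫⁻ x in V, ‖deriv (smoothStep (c k) t) (v k x)‖ₑ * ‖fderiv ℝ (v k) x‖ₑ) atTop := by
  have hmeas (k) : Continuous (smoothStep (c k) t ∘ v k) :=
    (contDiff_smoothStep (c k) t (m := 0)).continuous.comp (hv k).continuous
  refine (variationOn_le_liminf (w := fun k => smoothStep (c k) t ∘ v k)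
    (fun k => (hmeas k).aestronglyMeasurable) (fun k x => norm_smoothStep_le_one _ _ _) ?_).trans
    (liminf_le_liminf (.of_forall fun k => variationOn_smoothStep_comp_le _ _ (hv k)))
  filter_upwards [hlim, ht] with x hx hxt
  simpa only [indicator, mem_ofPred_eq, Function.comp_apply] using tendsto_smoothStep hc hx hxt

/-- The majorant `G` is there because Fatou's lemma, applied later along an exhaustion of `U`, needs
measurable integrands, and `t ↦ perimeterIn V {x | t < u x}` is not obviously measurable. -/
lemma exists_measurable_perimeterIn_le_of_integrable (hU : IsOpen U) (hu : Integrable u)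
    (hK : IsCompact K) (hKU : K ⊆ U) :
    ∃ G : ℝ → ℝ≥0∞, Measurable G ∧ ∫⁻ t, G t ≤ variationOn U u ∧
      ∀ᵐ t, perimeterIn (interior K) {x | t < u x} ≤ G t := by
  obtain ⟨ρ, hρ, hlim⟩ := exists_seq_ae_tendsto_mollify hu.locallyIntegrable
  obtain ⟨δ, hδ, hδU⟩ := hK.exists_cthickening_subset_open hU hKU
  let v (k : ℕ) := mollify volume (ρ k) u
  have hv (k) : ContDiff ℝ 2 (v k) := contDiff_mollify (ρ k) hu.locallyIntegrable
  have hv1 (k) : ContDiff ℝ 1 (v k) := (hv k).of_le one_le_two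
  let c (k : ℕ) : ℝ := k + 1
  have hc : Tendsto c atTop atTop :=
    tendsto_atTop_add_const_right _ _ tendsto_natCast_atTop_atTop
  let g (k : ℕ) (t : ℝ) : ℝ≥0∞ :=
    ∫⁻ x in interior K, ‖deriv (smoothStep (c k) t) (v k x)‖ₑ * ‖fderiv ℝ (v k) x‖ₑ
  have hdv (k) : Measurable fun x => ‖fderiv ℝ (v k) x‖ₑ :=
    ((hv1 k).continuous_fderiv one_ne_zero).measurable.enorm
  have hg (k) : Measurable (g k) :=
    (measurable_enorm_deriv_smoothStep_mul (c k) (hv k).continuous.measurable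
      (hdv k)).lintegral_prod_right'
  have hg_le : ∀ᶠ k in atTop, ∫⁻ t, g k t ≤ variationOn U u := by
    filter_upwards [hρ.eventually_le_const hδ] with k hk
    calc ∫⁻ t, g k t = ∫⁻ x in interior K, ‖fderiv ℝ (v k) x‖ₑ :=
          lintegral_lintegral_deriv_smoothStep_mul (Nat.cast_add_one_pos k)
            (hv k).continuous.measurable (hdv k)
      _ ≤ variationOn (interior K) (v k) :=
          lintegral_enorm_fderiv_le_variationOn isOpen_interior (hv k)
      _ ≤ variationOn U u := variationOn_mollify_le hu <| (cthickening_mono hk _).trans <|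
          (cthickening_subset_of_subset δ interior_subset).trans hδU
  refine ⟨fun t => liminf (fun k => g k t) atTop, .liminf hg, ?_, ?_⟩
  · exact (lintegral_liminf_le hg).trans (liminf_le_of_le (by isBoundedDefault) fun b hb =>
      (hb.and hg_le).exists.elim fun k hk => hk.1.trans hk.2)
  · filter_upwards [ae_forall_ae_ne (hu.1.aemeasurable.restrict (s := interior K))] with t ht
    exact perimeterIn_superlevel_le_liminf hv1 hc (ae_restrict_of_ae hlim) ht

lemma exists_measurable_perimeterIn_le (hU : IsOpen U) (hu : LocallyIntegrableOn u U)
    (hK : IsCompact K) (hKU : K ⊆ U) :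
    ∃ G : ℝ → ℝ≥0∞, Measurable G ∧ ∫⁻ t, G t ≤ variationOn U u ∧
      ∀ᵐ t, perimeterIn (interior K) {x | t < u x} ≤ G t := by
  obtain ⟨L, hL, hKL, hLU⟩ := exists_compact_between hK hU hKU
  have hLmeas : MeasurableSet L := hL.measurableSet
  have hw : Integrable (L.indicator u) :=
    (integrable_indicator_iff hLmeas).2 (hu.integrableOn_compact_subset hLU hL)
  have hwu (x) (hx : x ∈ interior L) : L.indicator u x = u x :=
    indicator_of_mem (interior_subset hx) u
  obtain ⟨G, hG, hGle, hGper⟩ :=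
    exists_measurable_perimeterIn_le_of_integrable isOpen_interior hw hK hKL
  refine ⟨G, hG, hGle.trans ?_, hGper.mono fun t ht => ?_⟩
  · rw [variationOn_congr isOpen_interior.measurableSet hwu]
    exact variationOn_mono u (interior_subset.trans hLU)
  · rwa [perimeterIn_congr isOpen_interior.measurableSet
      (B := {x | t < L.indicator u x}) fun x hx => by
        rw [mem_ofPred_eq, mem_ofPred_eq, hwu x (hKL (interior_subset hx))]]

theorem lintegral_perimeterIn_le_variationOn (hU : IsOpen U) (hu : LocallyIntegrableOn u U) :
    ∫⁻ t, perimeterIn U {x | t < u x} ≤ variationOn U u := by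
  obtain ⟨K, -, hK, hKU, hKT⟩ := exists_monotone_isCompact_exhaustion hU
  choose G hG hGle hGper using fun k => exists_measurable_perimeterIn_le hU hu (hK k) (hKU k)
  calc ∫⁻ t, perimeterIn U {x | t < u x} ≤ ∫⁻ t, liminf (fun k => G k t) atTop := by
        refine lintegral_mono_ae ?_
        filter_upwards [ae_all_iff.2 hGper] with t ht
        exact (variationOn_le_liminf_of_exhaustion hKT _).trans
          (liminf_le_liminf (.of_forall ht))
    _ ≤ liminf (fun k => ∫⁻ t, G k t) atTop := lintegral_liminf_le hG
    _ ≤ variationOn U u := (liminf_le_liminf (.of_forall hGle)).trans_eq (liminf_const _)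

theorem variationOn_le_lintegral_perimeterIn (hu : LocallyIntegrableOn u U) :
    variationOn U u ≤ ∫⁻ t, perimeterIn U {x | t < u x} := by
  refine variationOn_le_iff.2 fun φ hφ => ?_
  have hdiv : IntegrableOn (divg φ) U :=
    (integrable_divg hφ.contDiff hφ.hasCompactSupport).integrableOn
  have hdiv_zero : ∫ x in U, divg φ x = 0 := by
    simpa [integral_divg hφ.contDiff hφ.hasCompactSupport] using
      setIntegral_mul_divg hφ.tsupport_subset fun _ => 1
  rw [integral_mul_eq_integral_integral_superlevel_mul hu.aestronglyMeasurable.aemeasurable hdiv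
    hdiv_zero (hφ.integrable_mul_divg hu).integrableOn]
  exact (ofReal_integral_le_lintegral_ofReal _).trans
    (lintegral_mono fun t => variationOn_le_iff.1 le_rfl φ hφ)

end Coarea

theorem stmt11_general {n : ℕ} (U : Set (EuclideanSpace ℝ (Fin n))) (hU : IsOpen U)
    (u : EuclideanSpace ℝ (Fin n) → ℝ) (hu : LocallyIntegrableOn u U volume) :
    variationOn U u = ∫⁻ t : ℝ, perimeterIn U {x | t < u x} ∂volume :=
  le_antisymm (variationOn_le_lintegral_perimeterIn hu) (lintegral_perimeterIn_le_variationOn hU hu)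

/-- The coarea formula: for `u ∈ BV(U)` on an open set `U ⊆ ℝⁿ`,
`|Du|(U) = ∫_ℝ Per({u > t}, U) dt`. -/
theorem stmt11 {n : ℕ} (U : Set (EuclideanSpace ℝ (Fin n))) (hU : IsOpen U)
    (u : EuclideanSpace ℝ (Fin n) → ℝ) (hu : IntegrableOn u U volume)
    (hBV : variationOn U u ≠ ⊤) :
    variationOn U u = ∫⁻ t : ℝ, perimeterIn U {x | t < u x} ∂volume :=
  stmt11_general U hU u hu.locallyIntegrableOn
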